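/- For every integer n ≥ 1, there exists a binary necklace of length 2n having completely unclustered Burrows–Wheeler transform if and only if 2n+1 is an odd prime and 2 is a primitive root modulo 2n+1 (i.e., the multiplicative order of 2 modulo 2n+1 equals 2n). -/

import Mathlib

/-!
The rotation of `w` starting at `j` is read as the binary number `V j < 2 ^ N` (`rotVal`).
Lexicographic comparison of rotations is comparison of these numbers (`lexLe_iff`), the last
letter of a rotation is the parity of its number (`bwt_val`), and moving the starting point by one
gives `2 * V j = V (j + 1) + w_j * (2 ^ N - 1)` (`two_mul_rotVal`).

If the transform is unclustered, the sorted values are strictly increasing with alternating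
parities, and the smallest one is odd. The recurrence then shows that the successors `j + 1`, listed
in order of the values `V j`, first run through the even values and then through the odd values.
With `M` the `1`-based rank, the rank of `j + 1` is therefore `2 * M` modulo `2n + 1`
(`sortedPos_doubling`). As `j ↦ j + 1` is a single cycle, doubling is transitive on the nonzero
residues modulo `2n + 1`, that is, `2n + 1` is prime and `2` is a primitive root.

Conversely, for a primitive root `2`, let `w_j` be `0` or `1` according to whether the residue
`x_j` of `2 ^ j` modulo `p = 2n + 1` is at most `n`, so that the rotations are the periods of the
binary expansions of `x_j / p`. Uniqueness of the solution of the recurrence gives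
`V j * p = x_j * (2 ^ N - 1)`, hence the `m`-th rotation (counting from `0`) has residue `m + 1`,
and its last letter is the parity of `m + 1`.
-/

/-- The cyclic rotation of the word `w` of length `n` starting at position `j`. -/
def rotl {n k : ℕ} (w : Fin n → Fin k) (j : Fin n) : Fin n → Fin k :=
  fun i => w (i + j)

/-- Lexicographic order on words of the same length. -/
def LexLe {n k : ℕ} (f g : Fin n → Fin k) : Prop :=
  f = g ∨ ∃ i : Fin n, (∀ j : Fin n, j < i → f j = g j) ∧ f i < g i

instance {n k : ℕ} (f g : Fin n → Fin k) : Decidable (LexLe f g) := by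
  unfold LexLe; infer_instance

/-- The starting positions of the `n` cyclic rotations of `w`, listed so that the
corresponding rotations are in ascending lexicographic order (with multiplicity). -/
def sortedRot {n k : ℕ} (w : Fin n → Fin k) : List (Fin n) :=
  (List.finRange n).mergeSort fun a b => decide (LexLe (rotl w a) (rotl w b))

lemma length_sortedRot {n k : ℕ} (w : Fin n → Fin k) : (sortedRot w).length = n := by
  simp [sortedRot, List.length_mergeSort, List.length_finRange]

/-- The Burrows–Wheeler transform of (the necklace of) `w`: the `m`-th letter is the
last letter of the `m`-th cyclic rotation of `w` in ascending lexicographic order.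
The last letter of the rotation starting at `j` is `w ((j + n - 1) % n)`. -/
def bwt {n k : ℕ} (w : Fin n → Fin k) : Fin n → Fin k :=
  fun m =>
    let j : Fin n := (sortedRot w)[m.val]'(by rw [length_sortedRot]; exact m.isLt)
    w ⟨(j.val + (n - 1)) % n, Nat.mod_lt _ m.pos⟩

/-- A word is completely unclustered if no two consecutive letters are equal. -/
def Unclustered {n k : ℕ} (v : Fin n → Fin k) : Prop :=
  ∀ (i : ℕ) (h : i + 1 < n), v ⟨i, Nat.lt_of_succ_lt h⟩ ≠ v ⟨i + 1, h⟩

/-- The position `k * b + i` inside a word of length `k * n`, i.e. position `i` of block `b`. -/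
def blockIdx {k n : ℕ} (b : Fin n) (i : Fin k) : Fin (k * n) :=
  ⟨k * b.val + i.val, by
    have hb : b.val + 1 ≤ n := b.isLt
    have hi : i.val < k := i.isLt
    have h1 : k * (b.val + 1) ≤ k * n := Nat.mul_le_mul_left k hb
    have h2 : k * (b.val + 1) = k * b.val + k := by ring
    omega⟩

/-- A word of length `k * n` is an alphabet-permutation power if each of its `n`
consecutive blocks of length `k` contains every letter of the alphabet. -/
def IsAlphaPermPower {k n : ℕ} (v : Fin (k * n) → Fin k) : Prop :=
  ∀ b : Fin n, Function.Surjective fun i : Fin k => v (blockIdx b i)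

/-- An alphabet-permutation power `v` of length `k * n` has a tie at block `i`
if `v (k*i + k - 1) = v (k*(i+1))`. -/
def TieAt {k n : ℕ} (v : Fin (k * n) → Fin k) (i : ℕ) : Prop :=
  ∃ (h1 : k * i + (k - 1) < k * n) (h2 : k * (i + 1) < k * n),
    v ⟨k * i + (k - 1), h1⟩ = v ⟨k * (i + 1), h2⟩

/-- `π` is the standard permutation of the word `w`. -/
def IsStdPerm {n k : ℕ} (w : Fin n → Fin k) (π : Equiv.Perm (Fin n)) : Prop :=
  ∀ i j : Fin n, π i < π j ↔ (w i < w j ∨ (w i = w j ∧ i < j))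

/-- A word is primitive iff it is fixed by no nontrivial cyclic rotation
(equivalently, it is not a proper power). -/
def IsPrimitiveWord {n k : ℕ} (w : Fin n → Fin k) : Prop :=
  ∀ j : Fin n, rotl w j = w → j.val = 0

/-- The circular factor of length `n` of `w` starting at position `p`. -/
def circFactor {N k : ℕ} (w : Fin N → Fin k) (p : Fin N) (n : ℕ) : Fin n → Fin k :=
  fun t => w ⟨(p.val + t.val) % N, Nat.mod_lt _ p.pos⟩

/-- A de Bruijn word of order `n` over `Σ_k`: every word of length `n` occurs
exactly once as a circular factor. -/
def IsDeBruijn (k n : ℕ) (w : Fin (k ^ n) → Fin k) : Prop :=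
  ∀ f : Fin n → Fin k, ∃! p : Fin (k ^ n), circFactor w p n = f

/-- Cyclic successor of an index. -/
def nextIdx {N : ℕ} (i : Fin N) : Fin N := ⟨(i.val + 1) % N, Nat.mod_lt _ i.pos⟩

/-- A Hamiltonian cycle of the graph on `V` with edge set `E`, given as a cyclic
arrangement of all vertices. -/
def IsHamCycle {V : Type*} [Fintype V] (E : Set (V × V))
    (γ : Fin (Fintype.card V) → V) : Prop :=
  Function.Bijective γ ∧ ∀ i, (γ i, γ (nextIdx i)) ∈ E

/-- The Hamiltonian cycle `γ` visits the edge `e`. -/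
def Visits {V : Type*} [Fintype V] (γ : Fin (Fintype.card V) → V) (e : V × V) : Prop :=
  ∃ i, γ i = e.1 ∧ γ (nextIdx i) = e.2

/-! ### Binary values of words and of rotations -/

/-- The number with binary digits `f`, most significant digit first. -/
def binVal {N : ℕ} (f : Fin N → Fin 2) : ℕ := ∑ i : Fin N, (f i).val * 2 ^ (N - 1 - i.val)

lemma binVal_succ {N : ℕ} (f : Fin (N + 1) → Fin 2) :
    binVal f = (f 0).val * 2 ^ N + binVal (fun i => f i.succ) := by
  unfold binVal
  rw [Fin.sum_univ_succ]
  congr 1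
  refine Finset.sum_congr rfl fun i _ => ?_
  congr 2
  simp only [Fin.val_succ]
  omega

lemma binVal_lt {N : ℕ} (f : Fin N → Fin 2) : binVal f < 2 ^ N := by
  induction N with
  | zero => simp [binVal]
  | succ N ih =>
    rw [binVal_succ, pow_succ]
    have h1 := ih (fun i => f i.succ)
    have h2 : (f 0).val * 2 ^ N ≤ 1 * 2 ^ N := Nat.mul_le_mul_right _ (by omega)
    omega

lemma lexLe_succ {N : ℕ} (f g : Fin (N + 1) → Fin 2) :
    LexLe f g ↔ f 0 < g 0 ∨ (f 0 = g 0 ∧ LexLe (fun i => f i.succ) (fun i => g i.succ)) := by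
  unfold LexLe
  constructor
  · rintro (rfl | ⟨i, h1, h2⟩)
    · simp
    · refine Fin.cases ?_ ?_ i h1 h2
      · intro _ h; exact Or.inl h
      · intro i h1 h2
        refine Or.inr ⟨h1 0 (Fin.succ_pos i), Or.inr ⟨i, fun j hj => h1 j.succ ?_, h2⟩⟩
        exact Fin.succ_lt_succ_iff.mpr hj
  · rintro (h | ⟨h0, h | ⟨i, h1, h2⟩⟩)
    · exact Or.inr ⟨0, fun j hj => absurd hj (Fin.not_lt_zero j), h⟩
    · left
      funext i
      refine Fin.cases h0 (fun j => congrFun h j) i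
    · refine Or.inr ⟨i.succ, fun j => ?_, h2⟩
      refine Fin.cases (fun _ => h0) (fun k hk => h1 k (Fin.succ_lt_succ_iff.mp hk)) j

lemma lexLe_iff_binVal {N : ℕ} (f g : Fin N → Fin 2) : LexLe f g ↔ binVal f ≤ binVal g := by
  induction N with
  | zero =>
    have : f = g := funext fun i => i.elim0
    subst this
    simp [LexLe]
  | succ N ih =>
    rw [lexLe_succ, ih, binVal_succ f, binVal_succ g]
    have h1 := binVal_lt (fun i => f i.succ)
    have h2 := binVal_lt (fun i => g i.succ)
    generalize f 0 = a at *
    generalize g 0 = b at *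
    fin_cases a <;> fin_cases b <;> simp <;> omega

/-- The letters of `w`, continued periodically to all of `ℕ`. -/
def letter {N : ℕ} [NeZero N] (w : Fin N → Fin 2) (t : ℕ) : ℕ := (w (Fin.ofNat N t)).val

/-- The binary value of the rotation of `w` starting at position `j` modulo `N`. -/
def rotVal {N : ℕ} [NeZero N] (w : Fin N → Fin 2) (j : ℕ) : ℕ :=
  ∑ i ∈ Finset.range N, letter w (j + i) * 2 ^ (N - 1 - i)

section

variable {N : ℕ} [NeZero N] (w : Fin N → Fin 2)

lemma letter_congr {a b : ℕ} (h : a % N = b % N) : letter w a = letter w b := by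
  have : Fin.ofNat N a = Fin.ofNat N b := Fin.ext h
  rw [letter, letter, this]

lemma letter_le (t : ℕ) : letter w t ≤ 1 := by
  unfold letter; omega

lemma rotVal_congr {a b : ℕ} (h : a % N = b % N) : rotVal w a = rotVal w b := by
  refine Finset.sum_congr rfl fun i _ => ?_
  rw [letter_congr w (Nat.ModEq.add_right i h)]

lemma binVal_rotl (a : Fin N) : binVal (rotl w a) = rotVal w a := by
  rw [binVal, rotVal, Finset.sum_range]
  refine Finset.sum_congr rfl fun i _ => ?_
  have h : i + a = Fin.ofNat N (a.val + i.val) :=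
    Fin.ext (by simp [Fin.val_add, Nat.add_comm])
  rw [rotl, letter, h]

lemma lexLe_iff (a b : Fin N) : LexLe (rotl w a) (rotl w b) ↔ rotVal w a ≤ rotVal w b := by
  rw [lexLe_iff_binVal, binVal_rotl, binVal_rotl]

lemma rotVal_lt (j : ℕ) : rotVal w j < 2 ^ N := by
  have h := binVal_lt (rotl w (Fin.ofNat N j))
  rw [binVal_rotl] at h
  rwa [rotVal_congr w (show j % N = (Fin.ofNat N j).val % N by simp)]

lemma two_mul_rotVal (j : ℕ) :
    2 * rotVal w j = rotVal w (j + 1) + letter w j * (2 ^ N - 1) := by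
  obtain ⟨K, rfl⟩ : ∃ K, N = K + 1 := ⟨N - 1, (Nat.succ_pred_eq_of_ne_zero (NeZero.ne N)).symm⟩
  unfold rotVal
  rw [Finset.sum_range_succ', Finset.sum_range_succ]
  have h1 : letter w (j + 1 + K) = letter w j :=
    letter_congr w (by rw [add_assoc, add_comm 1 K, Nat.add_mod_right])
  have h2 : ∑ i ∈ Finset.range K, letter w (j + 1 + i) * 2 ^ (K + 1 - 1 - i) =
      2 * ∑ i ∈ Finset.range K, letter w (j + (i + 1)) * 2 ^ (K + 1 - 1 - (i + 1)) := by
    rw [Finset.mul_sum]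
    refine Finset.sum_congr rfl fun i hi => ?_
    have hi := Finset.mem_range.mp hi
    have : K + 1 - 1 - i = (K + 1 - 1 - (i + 1)) + 1 := by omega
    rw [this, pow_succ, show j + 1 + i = j + (i + 1) by ring]
    ring
  rw [h1, h2]
  obtain ⟨c, hc⟩ : ∃ c, 2 ^ K = c + 1 := ⟨2 ^ K - 1, by have := Nat.one_le_two_pow (n := K); omega⟩
  have h3 : 2 ^ (K + 1) - 1 = 2 * c + 1 := by rw [pow_succ, hc]; omega
  simp only [h3, Nat.add_sub_cancel, Nat.sub_self, Nat.sub_zero, hc, add_zero]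
  ring

lemma two_pow_sub_one_odd : ∃ c, 2 ^ N - 1 = 2 * c + 1 := by
  obtain ⟨K, rfl⟩ : ∃ K, N = K + 1 := ⟨N - 1, (Nat.succ_pred_eq_of_ne_zero (NeZero.ne N)).symm⟩
  refine ⟨2 ^ K - 1, ?_⟩
  have := Nat.one_le_two_pow (n := K)
  rw [pow_succ]; omega

lemma two_mul_rotVal_pred (j : ℕ) :
    2 * rotVal w (j + (N - 1)) = rotVal w j + letter w (j + (N - 1)) * (2 ^ N - 1) := by
  rw [two_mul_rotVal]
  congr 1
  refine rotVal_congr w ?_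
  have := NeZero.pos N
  rw [show j + (N - 1) + 1 = j + N by omega, Nat.add_mod_right]

lemma letter_pred (j : ℕ) : letter w (j + (N - 1)) = rotVal w j % 2 := by
  have h := two_mul_rotVal_pred w j
  have h1 := letter_le w (j + (N - 1))
  obtain ⟨c, hc⟩ := two_pow_sub_one_odd (N := N)
  rw [hc] at h
  generalize letter w (j + (N - 1)) = a at *
  interval_cases a <;> omega

end

/-! ### The sorted list of rotations -/

/-- The starting position of the `m`-th rotation in ascending order. -/
def sortedPos {N : ℕ} (w : Fin N → Fin 2) (m : Fin N) : Fin N :=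
  (sortedRot w)[m.val]'(by rw [length_sortedRot]; exact m.isLt)

lemma sortedRot_nodup {N : ℕ} (w : Fin N → Fin 2) : (sortedRot w).Nodup :=
  (List.mergeSort_perm _ _).nodup_iff.mpr (List.nodup_finRange N)

lemma sortedPos_bijective {N : ℕ} (w : Fin N → Fin 2) : Function.Bijective (sortedPos w) := by
  refine Finite.injective_iff_bijective.mp fun a b h => ?_
  exact Fin.ext (((sortedRot_nodup w).getElem_inj_iff).mp h)

lemma rotVal_sortedPos_mono {N : ℕ} [NeZero N] (w : Fin N → Fin 2) :
    Monotone (fun m : Fin N => rotVal w (sortedPos w m)) := by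
  have hp : (sortedRot w).Pairwise
      (fun a b => decide (LexLe (rotl w a) (rotl w b)) = true) := by
    refine List.pairwise_mergeSort ?_ ?_ _
    · intro a b c hab hbc
      simp only [decide_eq_true_eq, lexLe_iff] at *
      exact hab.trans hbc
    · intro a b
      simp only [Bool.or_eq_true, decide_eq_true_eq, lexLe_iff]
      exact le_total _ _
  intro a b hab
  rcases hab.eq_or_lt with rfl | hlt
  · exact le_rfl
  · have := List.pairwise_iff_getElem.mp hp a.val b.val
      (by rw [length_sortedRot]; exact a.isLt) (by rw [length_sortedRot]; exact b.isLt) hlt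
    simp only [decide_eq_true_eq, lexLe_iff] at this
    exact this

/-- The last letter of a rotation is the lowest binary digit of its value. -/
lemma bwt_val {N : ℕ} [NeZero N] (w : Fin N → Fin 2) (m : Fin N) : (bwt w m).val = rotVal w (sortedPos w m) % 2 := by
  rw [← letter_pred]; rfl

lemma strictMono_fin_eq {N : ℕ} {f : Fin N → Fin N} (hf : StrictMono f) (i : Fin N) : f i = i :=
  le_antisymm hf.apply_le hf.le_apply

/-! ### An unclustered transform makes 2 a primitive root -/

/-- Equal rotations have equal last letters, so in an unclustered transform neighbouring values
differ. -/
lemma rotVal_sortedPos_strictMono {N : ℕ} [NeZero N] (w : Fin N → Fin 2)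
    (hw : Unclustered (bwt w)) : StrictMono (fun m : Fin N => rotVal w (sortedPos w m)) := by
  obtain ⟨K, rfl⟩ : ∃ K, N = K + 1 := ⟨N - 1, (Nat.succ_pred_eq_of_ne_zero (NeZero.ne N)).symm⟩
  refine Fin.strictMono_iff_lt_succ.mpr fun i => ?_
  refine lt_of_le_of_ne (rotVal_sortedPos_mono w (Fin.castSucc_lt_succ).le) fun h => ?_
  refine hw i.val (by omega) (Fin.ext ?_)
  rw [bwt_val, bwt_val]
  exact congrArg (· % 2) h

/-- The transform is `1010…10`: it alternates, and it cannot start with `0`, since the predecessor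
of the smallest rotation would then have half its value. -/
lemma rotVal_sortedPos_mod_two (n : ℕ) [NeZero (2 * n)] (w : Fin (2 * n) → Fin 2)
    (hw : Unclustered (bwt w)) (m : ℕ) (hm : m < 2 * n) :
    rotVal w (sortedPos w ⟨m, hm⟩) % 2 = (m + 1) % 2 := by
  have hN := NeZero.pos (2 * n)
  induction m with
  | zero =>
    by_contra hne
    have h0 : rotVal w (sortedPos w ⟨0, hm⟩) % 2 = 0 := by omega
    have h1 := two_mul_rotVal_pred w (sortedPos w ⟨0, hm⟩)
    rw [letter_pred, h0, zero_mul, add_zero] at h1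
    obtain ⟨k, hk⟩ := (sortedPos_bijective w).2
      (Fin.ofNat (2 * n) ((sortedPos w ⟨0, hm⟩).val + (2 * n - 1)))
    have h2 : rotVal w (sortedPos w k) =
        rotVal w ((sortedPos w ⟨0, hm⟩).val + (2 * n - 1)) := by
      rw [hk]; exact rotVal_congr w (by simp)
    have h3 := rotVal_sortedPos_mono w (show (⟨0, hm⟩ : Fin (2 * n)) ≤ k from Nat.zero_le _)
    have h4 : rotVal w (sortedPos w k) = rotVal w (sortedPos w ⟨0, hm⟩) := by
      simp only at h3; omega
    have h5 := (rotVal_sortedPos_strictMono w hw).injective h4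
    have h6 := congrArg Fin.val hk
    rw [h5] at h6
    simp only [Fin.val_ofNat] at h6
    have h7 := (sortedPos w ⟨0, hm⟩).isLt
    generalize (sortedPos w ⟨0, hm⟩).val = a at *
    by_cases ha : a = 0
    · subst ha
      rw [zero_add, Nat.mod_eq_of_lt (by omega)] at h6
      omega
    · rw [show a + (2 * n - 1) = (a - 1) + 2 * n by omega, Nat.add_mod_right,
        Nat.mod_eq_of_lt (by omega)] at h6
      omega
  | succ m ih =>
    have h1 := ih (by omega)
    have h2 := hw m hm
    have h3 : (bwt w ⟨m, by omega⟩).val ≠ (bwt w ⟨m + 1, hm⟩).val := fun h => h2 (Fin.ext h)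
    rw [bwt_val, bwt_val] at h3
    omega

/-- The inverse perfect shuffle: on `1`-based positions it is doubling modulo `2n + 1`. -/
def shuffle (n : ℕ) (i : Fin (2 * n)) : Fin (2 * n) :=
  ⟨if i.val < n then 2 * i.val + 1 else 2 * (i.val - n), by split <;> omega⟩

lemma shuffle_cast (n : ℕ) (i : Fin (2 * n)) :
    (((shuffle n i).val + 1 : ℕ) : ZMod (2 * n + 1)) = 2 * ((i.val + 1 : ℕ) : ZMod (2 * n + 1)) := by
  have h : ((2 * n + 1 : ℕ) : ZMod (2 * n + 1)) = 0 := ZMod.natCast_self _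
  by_cases hi : i.val < n
  · simp only [shuffle, hi, if_true]
    push_cast; ring
  · have h2 : (shuffle n i).val + 1 + (2 * n + 1) = 2 * (i.val + 1) := by
      simp only [shuffle, hi, if_false]; omega
    have h3 := congrArg (Nat.cast : ℕ → ZMod (2 * n + 1)) h2
    rw [Nat.cast_add, h, add_zero] at h3
    rw [h3]; push_cast; ring

/-- Passing from a rotation to the one starting one position later doubles its `1`-based rank
modulo `2n + 1`. -/
lemma sortedPos_doubling (n : ℕ) [NeZero (2 * n)] (w : Fin (2 * n) → Fin 2)
    (hw : Unclustered (bwt w)) (i : Fin (2 * n)) :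
    (sortedPos w (shuffle n i)).val % (2 * n) = ((sortedPos w i).val + 1) % (2 * n) := by
  have hN := NeZero.pos (2 * n)
  have hs := rotVal_sortedPos_strictMono w hw
  let e := Equiv.ofBijective _ (sortedPos_bijective w)
  let τ : Fin (2 * n) → Fin (2 * n) := fun i =>
    Fin.ofNat (2 * n) ((sortedPos w (shuffle n i)).val + (2 * n - 1))
  have hτv : ∀ i, 2 * rotVal w (τ i) = rotVal w (sortedPos w (shuffle n i)) +
      ((shuffle n i).val + 1) % 2 * (2 ^ (2 * n) - 1) := by
    intro i
    have h1 := two_mul_rotVal_pred w (sortedPos w (shuffle n i))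
    rw [letter_pred, rotVal_sortedPos_mod_two n w hw (shuffle n i).val (shuffle n i).isLt] at h1
    rw [← h1]
    congr 1
    exact rotVal_congr w (by simp [τ])
  -- The predecessors, taken in shuffled order, are listed by increasing value.
  have hτ : ∀ i j, i < j → rotVal w (τ i) < rotVal w (τ j) := by
    intro i j hij
    have hij' : i.val < j.val := hij
    have h1 := hτv i
    have h2 := hτv j
    have hji := j.isLt
    have hmono : shuffle n i < shuffle n j → rotVal w (sortedPos w (shuffle n i)) <
      rotVal w (sortedPos w (shuffle n j)) := fun h => hs h
    by_cases hj : j.val < n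
    · have hi : i.val < n := by omega
      have h3 := hmono (by simp only [shuffle, hi, hj, if_true, Fin.lt_def]; omega)
      have e1 : ((shuffle n i).val + 1) % 2 = 0 := by simp only [shuffle, hi, if_true]; omega
      have e2 : ((shuffle n j).val + 1) % 2 = 0 := by simp only [shuffle, hj, if_true]; omega
      rw [e1] at h1; rw [e2] at h2
      omega
    · have e2 : ((shuffle n j).val + 1) % 2 = 1 := by simp only [shuffle, hj, if_false]; omega
      rw [e2] at h2
      by_cases hi : i.val < n
      · have e1 : ((shuffle n i).val + 1) % 2 = 0 := by simp only [shuffle, hi, if_true]; omega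
        rw [e1] at h1
        have h4 := rotVal_lt w (sortedPos w (shuffle n i))
        obtain ⟨c, hc⟩ := two_pow_sub_one_odd (N := 2 * n)
        omega
      · have h3 := hmono (by simp only [shuffle, hi, hj, if_false, Fin.lt_def]; omega)
        have e1 : ((shuffle n i).val + 1) % 2 = 1 := by simp only [shuffle, hi, if_false]; omega
        rw [e1] at h1
        omega
  have hmono : StrictMono (fun i => e.symm (τ i)) := by
    intro i j hij
    refine hs.lt_iff_lt.mp ?_
    have : ∀ k, sortedPos w (e.symm (τ k)) = τ k := fun k => e.apply_symm_apply _
    simp only [this]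
    exact hτ i j hij
  have h1 : τ i = sortedPos w i := by
    have := strictMono_fin_eq hmono i
    exact (Equiv.symm_apply_eq e).mp this
  have h2 : (sortedPos w i).val = ((sortedPos w (shuffle n i)).val + (2 * n - 1)) % (2 * n) := by
    rw [← h1]; simp [τ]
  rw [h2, Nat.mod_add_mod]
  rw [show (sortedPos w (shuffle n i)).val + (2 * n - 1) + 1 =
    (sortedPos w (shuffle n i)).val + 2 * n by omega, Nat.add_mod_right]

lemma prime_of_unclustered (n : ℕ) (hn : 1 ≤ n) (w : Fin (2 * n) → Fin 2)
    (hw : Unclustered (bwt w)) :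
    Nat.Prime (2 * n + 1) ∧ orderOf (2 : ZMod (2 * n + 1)) = 2 * n := by
  have : NeZero (2 * n) := ⟨by omega⟩
  let e := Equiv.ofBijective _ (sortedPos_bijective w)
  let X : Fin (2 * n) → ZMod (2 * n + 1) := fun i => ((i.val + 1 : ℕ) : ZMod (2 * n + 1))
  let Y : ℕ → ZMod (2 * n + 1) := fun j => X (e.symm (Fin.ofNat (2 * n) j))
  have hY : ∀ j, Y (j + 1) = 2 * Y j := by
    intro j
    have h := sortedPos_doubling n w hw (e.symm (Fin.ofNat (2 * n) j))
    have h1 : sortedPos w (e.symm (Fin.ofNat (2 * n) j)) = Fin.ofNat (2 * n) j :=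
      e.apply_symm_apply _
    rw [h1] at h
    have h2 : e (shuffle n (e.symm (Fin.ofNat (2 * n) j))) = Fin.ofNat (2 * n) (j + 1) := by
      apply Fin.ext
      rw [← Nat.mod_eq_of_lt (e (shuffle n (e.symm (Fin.ofNat (2 * n) j)))).isLt]
      refine h.trans ?_
      simp
    have h3 := (Equiv.symm_apply_eq e).mpr h2.symm
    simp only [Y, h3]
    exact shuffle_cast n _
  have hpow : ∀ j, Y j = 2 ^ j * Y 0 := by
    intro j
    induction j with
    | zero => simp
    | succ j ih => rw [hY, ih, pow_succ]; ring
  have hsurj : ∀ x : ZMod (2 * n + 1), x ≠ 0 → ∃ j : ℕ, x = 2 ^ j * Y 0 := by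
    intro x hx
    have hx0 : x.val ≠ 0 := fun h => hx ((ZMod.val_eq_zero x).mp h)
    have hxl := ZMod.val_lt x
    refine ⟨(e ⟨x.val - 1, by omega⟩).val, ?_⟩
    rw [← hpow]
    have : Fin.ofNat (2 * n) (e ⟨x.val - 1, by omega⟩).val = e ⟨x.val - 1, by omega⟩ := by simp
    simp only [Y, X, this, Equiv.symm_apply_apply]
    rw [show x.val - 1 + 1 = x.val by omega, ZMod.natCast_zmod_val]
  have : Fact (1 < 2 * n + 1) := ⟨by omega⟩
  obtain ⟨j₀, hj₀⟩ := hsurj 1 one_ne_zero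
  have hu2 : IsUnit (2 : ZMod (2 * n + 1)) := by
    have := (ZMod.isUnit_iff_coprime 2 (2 * n + 1)).mpr (by simp)
    exact_mod_cast this
  have hua : IsUnit (Y 0) := IsUnit.of_mul_eq_one (2 ^ j₀) ((mul_comm _ _).trans hj₀.symm)
  have hunit : ∀ x : ZMod (2 * n + 1), x ≠ 0 → IsUnit x := by
    intro x hx
    obtain ⟨j, rfl⟩ := hsurj x hx
    exact (hu2.pow j).mul hua
  have hprime : Nat.Prime (2 * n + 1) := by
    rw [Nat.prime_def_lt]
    refine ⟨by omega, fun m hm hd => ?_⟩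
    have hm0 : m ≠ 0 := by rintro rfl; simp at hd
    have h1 : ((m : ℕ) : ZMod (2 * n + 1)) ≠ 0 := by
      rw [Ne, ZMod.natCast_eq_zero_iff]
      exact fun h => absurd (Nat.le_of_dvd (by omega) h) (by omega)
    have h2 := (ZMod.isUnit_iff_coprime m (2 * n + 1)).mp (hunit _ h1)
    exact Nat.Coprime.eq_one_of_dvd h2 hd
  refine ⟨hprime, ?_⟩
  have : Fact (Nat.Prime (2 * n + 1)) := ⟨hprime⟩
  obtain ⟨u, hu⟩ := hu2
  have hcard : Nat.card (ZMod (2 * n + 1))ˣ = 2 * n := by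
    rw [Nat.card_eq_fintype_card, ZMod.card_units]; simp
  refine Eq.trans ?_ hcard
  rw [← hu, orderOf_units]
  refine orderOf_eq_card_of_forall_mem_zpowers fun x => ?_
  obtain ⟨j, hj⟩ := hsurj x x.ne_zero
  rw [Subgroup.mem_zpowers_iff]
  refine ⟨(j : ℤ) - (j₀ : ℤ), ?_⟩
  rw [zpow_sub, zpow_natCast, zpow_natCast, mul_inv_eq_iff_eq_mul]
  apply Units.ext
  push_cast
  rw [hj, hu]
  calc (2 : ZMod (2 * n + 1)) ^ j = 2 ^ j * (2 ^ j₀ * Y 0) := by rw [← hj₀, mul_one]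
    _ = _ := by ring

/-! ### A primitive root 2 gives an unclustered transform -/

/-- The word of binary digits of `1 / (2n + 1)`: its `i`-th letter is `0` exactly when the residue
of `2 ^ i` is at most `n`. -/
def rootWord (n : ℕ) (i : Fin (2 * n)) : Fin 2 :=
  if ((2 : ZMod (2 * n + 1)) ^ i.val).val ≤ n then 0 else 1

lemma unclustered_rootWord (n : ℕ) (hn : 1 ≤ n) (hp : Nat.Prime (2 * n + 1))
    (ho : orderOf (2 : ZMod (2 * n + 1)) = 2 * n) : Unclustered (bwt (rootWord n)) := by
  have : NeZero (2 * n) := ⟨by omega⟩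
  set w := rootWord n with hwdef
  let x : ℕ → ℕ := fun j => ((2 : ZMod (2 * n + 1)) ^ j).val
  have h2 : (2 : ZMod (2 * n + 1)) ≠ 0 := by
    have : Fact (Nat.Prime (2 * n + 1)) := ⟨hp⟩
    intro h
    rw [h, orderOf_zero] at ho
    omega
  have hxper : ∀ j, x (j % (2 * n)) = x j := by
    intro j
    simp only [x]
    have h := pow_mod_orderOf (2 : ZMod (2 * n + 1)) j
    rw [ho] at h
    rw [h]
  have hxpos : ∀ j, x j ≠ 0 := by
    have : Fact (Nat.Prime (2 * n + 1)) := ⟨hp⟩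
    exact fun j h => pow_ne_zero j h2 ((ZMod.val_eq_zero _).mp h)
  have hxlt : ∀ j, x j < 2 * n + 1 := fun j => ZMod.val_lt _
  have hletter : ∀ j, letter w j = if x j ≤ n then 0 else 1 := by
    intro j
    have : letter w j = if x (j % (2 * n)) ≤ n then 0 else 1 := by
      simp only [letter, hwdef, rootWord, x, Fin.val_ofNat]
      split <;> rfl
    rw [this, hxper]
  have hrec : ∀ j, 2 * x j = x (j + 1) + letter w j * (2 * n + 1) := by
    intro j
    have h3 : x (j + 1) = (2 * x j) % (2 * n + 1) := by
      simp only [x]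
      rw [← ZMod.val_natCast]
      congr 1
      push_cast
      rw [ZMod.natCast_zmod_val, pow_succ]
      exact mul_comm _ _
    have := hxlt j
    rw [hletter, h3]
    split
    · rw [Nat.mod_eq_of_lt (by omega)]; omega
    · rw [Nat.mod_eq_sub_mod (by omega), Nat.mod_eq_of_lt (by omega)]; omega
  -- The defect of the claimed identity doubles with `j` and is periodic, so it vanishes.
  let D : ℕ → ℤ := fun j =>
    (rotVal w j : ℤ) * (2 * n + 1) - (x j : ℤ) * ((2 ^ (2 * n) - 1 : ℕ) : ℤ)
  have hD : ∀ j, D (j + 1) = 2 * D j := by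
    intro j
    have e1 : (2 : ℤ) * rotVal w j = rotVal w (j + 1) +
        letter w j * ((2 ^ (2 * n) - 1 : ℕ) : ℤ) := by exact_mod_cast two_mul_rotVal w j
    have e2 : (2 : ℤ) * x j = x (j + 1) + letter w j * (2 * n + 1) := by exact_mod_cast hrec j
    simp only [D]
    linear_combination (-(2 * (n : ℤ) + 1)) * e1 + ((2 ^ (2 * n) - 1 : ℕ) : ℤ) * e2
  have hDpow : ∀ j, D j = 2 ^ j * D 0 := by
    intro j
    induction j with
    | zero => simp
    | succ j ih => rw [hD, ih, pow_succ]; ring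
  have hD0 : D 0 = 0 := by
    have e1 : D (2 * n) = D 0 := by
      simp only [D]
      rw [rotVal_congr w (show (2 * n) % (2 * n) = 0 % (2 * n) by simp), ← hxper (2 * n),
        Nat.mod_self]
    rw [hDpow (2 * n)] at e1
    have e2 : (2 : ℤ) ^ (2 * n) ≠ 1 := by
      have : (1 : ℤ) < 2 ^ (2 * n) := one_lt_pow₀ (by norm_num) (by omega)
      omega
    have e3 : ((2 : ℤ) ^ (2 * n) - 1) * D 0 = 0 := by linarith
    rcases mul_eq_zero.mp e3 with h | h
    · exact absurd (by linarith) e2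
    · exact h
  have hV : ∀ j, rotVal w j * (2 * n + 1) = x j * (2 ^ (2 * n) - 1) := by
    intro j
    have e1 : D j = 0 := by rw [hDpow, hD0, mul_zero]
    have e2 : (rotVal w j : ℤ) * (2 * n + 1) = (x j : ℤ) * ((2 ^ (2 * n) - 1 : ℕ) : ℤ) := by
      simp only [D] at e1; linarith
    exact_mod_cast e2
  obtain ⟨c, hc⟩ := two_pow_sub_one_odd (N := 2 * n)
  have hxinj : ∀ a b : Fin (2 * n), x a = x b → a = b := by
    intro a b hab
    have e1 := ZMod.val_injective _ hab
    exact Fin.ext (pow_injOn_Iio_orderOf (by rw [ho]; exact a.isLt) (by rw [ho]; exact b.isLt) e1)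
  let f : Fin (2 * n) → Fin (2 * n) := fun m =>
    ⟨x (sortedPos w m) - 1, by
      have := hxlt (sortedPos w m); have := hxpos (sortedPos w m); omega⟩
  have hf : StrictMono f := by
    intro a b hab
    have e1 := rotVal_sortedPos_mono w hab.le
    simp only at e1
    have e2 : x (sortedPos w a) ≤ x (sortedPos w b) := by
      refine Nat.le_of_mul_le_mul_right (c := 2 ^ (2 * n) - 1) ?_ (by omega)
      rw [← hV, ← hV]
      exact Nat.mul_le_mul_right _ e1
    have e3 : x (sortedPos w a) ≠ x (sortedPos w b) := fun h =>
      hab.ne ((sortedPos_bijective w).1 (hxinj _ _ h))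
    have e4 := hxpos (sortedPos w a)
    simp only [f, Fin.lt_def]
    omega
  have hbwt : ∀ m : Fin (2 * n), (bwt w m).val = (m.val + 1) % 2 := by
    intro m
    have e1 := congrArg Fin.val (strictMono_fin_eq hf m)
    have e2 := hxpos (sortedPos w m)
    have e3 : x (sortedPos w m) = m.val + 1 := by simp only [f] at e1; omega
    rw [bwt_val]
    have e4 := congrArg (· % 2) (hV (sortedPos w m))
    simp only [hc, e3] at e4
    rw [Nat.mul_mod, Nat.mul_mod (m.val + 1)] at e4
    rw [show (2 * n + 1) % 2 = 1 by omega, show (2 * c + 1) % 2 = 1 by omega] at e4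
    omega
  intro i hi h
  have e1 := congrArg Fin.val h
  rw [hbwt, hbwt] at e1
  simp only at e1
  omega

theorem stmt3 (n : ℕ) (hn : 1 ≤ n) :
    (∃ w : Fin (2 * n) → Fin 2, Unclustered (bwt w)) ↔
      (Nat.Prime (2 * n + 1) ∧ orderOf (2 : ZMod (2 * n + 1)) = 2 * n) := by
  constructor
  · rintro ⟨w, hw⟩
    exact prime_of_unclustered n hn w hw
  · rintro ⟨hp, ho⟩
    exact ⟨rootWord n, unclustered_rootWord n hn hp ho⟩
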